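/- Let A be a finite-dimensional left Leibniz algebra over a field F of characteristic zero and let S be a solvable subinvariant subalgebra of A. Then S ⊆ rad(A). -/

import Mathlib

open Submodule

section LeibnizDefs

variable {F : Type*} {A : Type*} [Field F] [AddCommGroup A] [Module F A]

/-- The span of all products `b*c` with `b ∈ B`, `c ∈ C`. -/
def mulSub (mul : A →ₗ[F] A →ₗ[F] A) (B C : Submodule F A) : Submodule F A :=
  Submodule.span F {z : A | ∃ b ∈ B, ∃ c ∈ C, mul b c = z}

/-- `fSub mul B C = B·C + C·B`, the function `f(B,C)`. -/
def fSub (mul : A →ₗ[F] A →ₗ[F] A) (B C : Submodule F A) : Submodule F A :=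
  mulSub mul B C ⊔ mulSub mul C B

/-- `fIter mul B C n = f^{n+1}(B,C)` (so index `0` is `f^1(B,C) = f(B,C)`). -/
def fIter (mul : A →ₗ[F] A →ₗ[F] A) (B C : Submodule F A) : ℕ → Submodule F A
  | 0 => fSub mul B C
  | n + 1 => fSub mul B (fIter mul B C n)

/-- `lcs mul B n = B^{n+1}`, the lower central series (index `0` is `B^1 = B`). -/
def lcs (mul : A →ₗ[F] A →ₗ[F] A) (B : Submodule F A) : ℕ → Submodule F A
  | 0 => B
  | n + 1 => mulSub mul B (lcs mul B n)

/-- `ds mul B n = B^{(n+1)}`, the derived series (index `0` is `B^{(1)} = B`). -/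
def ds (mul : A →ₗ[F] A →ₗ[F] A) (B : Submodule F A) : ℕ → Submodule F A
  | 0 => B
  | n + 1 => mulSub mul (ds mul B n) (ds mul B n)

/-- `B^ω = ⋂_{i ≥ 1} B^i`. -/
def omegaSub (mul : A →ₗ[F] A →ₗ[F] A) (B : Submodule F A) : Submodule F A :=
  ⨅ n, lcs mul B n

/-- `B` is a subalgebra: a subspace closed under multiplication. -/
def IsSubalg (mul : A →ₗ[F] A →ₗ[F] A) (B : Submodule F A) : Prop :=
  ∀ x ∈ B, ∀ y ∈ B, mul x y ∈ B

/-- `I` is an ideal of the subalgebra `S`: `I ⊆ S` and `xI + Ix ⊆ I` for all `x ∈ S`. -/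
def IsIdealIn (mul : A →ₗ[F] A →ₗ[F] A) (I S : Submodule F A) : Prop :=
  I ≤ S ∧ ∀ x ∈ S, ∀ y ∈ I, mul x y ∈ I ∧ mul y x ∈ I

/-- `B` is subinvariant in `S`: there is a chain of subalgebras
`B = c 0 ⊆ c 1 ⊆ ⋯ ⊆ c t = S` with each term an ideal of the next. -/
def IsSubinvariantIn (mul : A →ₗ[F] A →ₗ[F] A) (B S : Submodule F A) : Prop :=
  ∃ (t : ℕ) (c : ℕ → Submodule F A), c 0 = B ∧ c t = S ∧
    (∀ i ≤ t, IsSubalg mul (c i)) ∧ ∀ i < t, IsIdealIn mul (c i) (c (i + 1))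

/-- `B` is nilpotent: `B^m = 0` for some `m`. -/
def IsNilpotentSub (mul : A →ₗ[F] A →ₗ[F] A) (B : Submodule F A) : Prop :=
  ∃ m, lcs mul B m = ⊥

/-- `B` is solvable: `B^{(m)} = 0` for some `m`. -/
def IsSolvableSub (mul : A →ₗ[F] A →ₗ[F] A) (B : Submodule F A) : Prop :=
  ∃ m, ds mul B m = ⊥

/-- The centralizer `Z_A(B) = {x : xb = 0 = bx for all b ∈ B}`. -/
def centralizerSet (mul : A →ₗ[F] A →ₗ[F] A) (B : Submodule F A) : Set A :=
  {x : A | ∀ b ∈ B, mul x b = 0 ∧ mul b x = 0}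

/-- `R` is the radical (the maximal solvable ideal) of the subalgebra `S`. -/
def IsRadicalIn (mul : A →ₗ[F] A →ₗ[F] A) (S R : Submodule F A) : Prop :=
  IsIdealIn mul R S ∧ IsSolvableSub mul R ∧
    ∀ T, IsIdealIn mul T S → IsSolvableSub mul T → T ≤ R

/-- `N` is the nilradical (the maximal nilpotent ideal) of the subalgebra `S`. -/
def IsNilradicalIn (mul : A →ₗ[F] A →ₗ[F] A) (S N : Submodule F A) : Prop :=
  IsIdealIn mul N S ∧ IsNilpotentSub mul N ∧
    ∀ T, IsIdealIn mul T S → IsNilpotentSub mul T → T ≤ N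

/-- `H` is a Cartan subalgebra: a nilpotent self-normalizing subalgebra. -/
def IsCartan (mul : A →ₗ[F] A →ₗ[F] A) (H : Submodule F A) : Prop :=
  IsSubalg mul H ∧ IsNilpotentSub mul H ∧
    ∀ x : A, (∀ h ∈ H, mul x h ∈ H ∧ mul h x ∈ H) → x ∈ H

/-- The subalgebra generated by a set: the smallest subalgebra containing it. -/
def subalgGen (mul : A →ₗ[F] A →ₗ[F] A) (s : Set A) : Submodule F A :=
  sInf {S : Submodule F A | IsSubalg mul S ∧ s ⊆ (S : Set A)}

end LeibnizDefs

/-!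
In finite dimension every subalgebra has a radical, so it suffices to show that `R = rad I` is an
ideal of `B` whenever `I` is an ideal of `B`; climbing the chain then carries `S` into `rad A`.

For `x ∈ B`, left multiplication `D` by `x` is a derivation preserving `I`, and the point is that
`J + D J` is solvable for every solvable ideal `J` of `I`. Expand `exp (t D) w = ∑ tⁿ Dⁿ w / n!`
modulo `J`: lowest-order coefficients are multiplicative, and an element of `J + D J` is modulo `J`
the coefficient of `t` for some `w ∈ J`. Hence an element of `(J + D J)^{(n)}` is modulo `J` the
lowest-order coefficient for some `w ∈ J^{(n)}`, and so lies in `J` as soon as `J^{(n)} = 0`.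

Right multiplications are recovered from `x y + y x`, which multiplies everything to zero from the
left: the elements of `I` with this property form a solvable ideal.
-/

section Derivation

open Finset.HasAntidiagonal (antidiagonal mem_antidiagonal)

/-- The endomorphism `D` is a derivation of the (nonassociative) multiplication `mul`. -/
def IsDerivation {R M : Type*} [CommSemiring R] [AddCommMonoid M] [Module R M]
    (mul : M →ₗ[R] M →ₗ[R] M) (D : Module.End R M) : Prop :=
  ∀ y z, D (mul y z) = mul (D y) z + mul y (D z)

/-- `mul` is a left Leibniz multiplication: `x (y z) = (x y) z + y (x z)`, that is, all left
multiplications are derivations. -/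
def IsLeftLeibniz {R M : Type*} [CommSemiring R] [AddCommMonoid M] [Module R M]
    (mul : M →ₗ[R] M →ₗ[R] M) : Prop :=
  ∀ x, IsDerivation mul (mul x)

theorem IsDerivation.pow_apply_mul {R M : Type*} [CommSemiring R] [AddCommMonoid M] [Module R M]
    {mul : M →ₗ[R] M →ₗ[R] M} {D : Module.End R M} (hD : IsDerivation mul D) (n : ℕ) (y z : M) :
    (D ^ n) (mul y z) =
      ∑ p ∈ antidiagonal n, n.choose p.1 • mul ((D ^ p.1) y) ((D ^ p.2) z) := by
  induction n with
  | zero => simp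
  | succ n ih =>
    rw [Finset.sum_antidiagonal_choose_succ_nsmul (fun i j ↦ mul ((D ^ i) y) ((D ^ j) z)) n]
    simp only [pow_succ', Module.End.mul_apply, ih, map_sum, map_nsmul, hD _ _, nsmul_add,
      Finset.sum_add_distrib]
    rw [add_comm]
    congr 1
    refine Finset.sum_congr rfl fun p hp ↦ ?_
    rw [Nat.choose_symm_of_eq_add (mem_antidiagonal.1 hp).symm]

theorem IsLeftLeibniz.mul_add_mul_swap_mem_ker {R M : Type*} [CommRing R] [AddCommGroup M]
    [Module R M] {mul : M →ₗ[R] M →ₗ[R] M} (hmul : IsLeftLeibniz mul) (x y : M) :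
    mul x y + mul y x ∈ LinearMap.ker mul := by
  refine LinearMap.mem_ker.2 (LinearMap.ext fun z ↦ ?_)
  rw [map_add, LinearMap.add_apply, LinearMap.zero_apply,
    ← sub_eq_of_eq_add (hmul x y z), ← sub_eq_of_eq_add (hmul y x z)]
  abel

end Derivation

section Solvable

variable {F A : Type*} [Field F] [AddCommGroup A] [Module F A] {mul : A →ₗ[F] A →ₗ[F] A}
  {B C I J K : Submodule F A}

theorem mulSub_eq_map₂ (mul : A →ₗ[F] A →ₗ[F] A) (B C : Submodule F A) :
    mulSub mul B C = map₂ mul B C :=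
  (map₂_eq_span_image2 mul B C).symm

theorem ds_succ (mul : A →ₗ[F] A →ₗ[F] A) (B : Submodule F A) (n : ℕ) :
    ds mul B (n + 1) = map₂ mul (ds mul B n) (ds mul B n) :=
  mulSub_eq_map₂ mul _ _

theorem ds_mono (h : B ≤ C) (n : ℕ) : ds mul B n ≤ ds mul C n := by
  induction n with
  | zero => exact h
  | succ n ih =>
    rw [ds_succ, ds_succ]
    exact map₂_le_map₂ ih ih

theorem ds_add (mul : A →ₗ[F] A →ₗ[F] A) (B : Submodule F A) (m n : ℕ) :
    ds mul B (m + n) = ds mul (ds mul B m) n := by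
  induction n with
  | zero => rfl
  | succ n ih => rw [← add_assoc, ds_succ, ds_succ, ih]

theorem IsSubalg.ds_le (hB : IsSubalg mul B) (n : ℕ) : ds mul B n ≤ B := by
  induction n with
  | zero => exact le_rfl
  | succ n ih =>
    rw [ds_succ]
    exact (map₂_le_map₂ ih ih).trans (map₂_le.2 hB)

theorem IsSolvableSub.of_ds_le {n : ℕ} (hC : IsSolvableSub mul C) (h : ds mul B n ≤ C) :
    IsSolvableSub mul B := by
  obtain ⟨m, hm⟩ := hC
  refine ⟨n + m, eq_bot_iff.2 ?_⟩
  rw [ds_add, ← hm]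
  exact ds_mono h m

theorem isIdealIn_iff_map₂_le :
    IsIdealIn mul J I ↔ J ≤ I ∧ map₂ mul I J ≤ J ∧ map₂ mul J I ≤ J := by
  simp only [IsIdealIn, map₂_le]
  exact ⟨fun h ↦ ⟨h.1, fun x hx y hy ↦ (h.2 x hx y hy).1, fun y hy x hx ↦ (h.2 x hx y hy).2⟩,
    fun h ↦ ⟨h.1, fun x hx y hy ↦ ⟨h.2.1 x hx y hy, h.2.2 y hy x hx⟩⟩⟩

theorem IsSubalg.isIdealIn_self (hB : IsSubalg mul B) : IsIdealIn mul B B :=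
  ⟨le_rfl, fun x hx y hy ↦ ⟨hB x hx y hy, hB y hy x hx⟩⟩

namespace IsIdealIn

theorem bot (mul : A →ₗ[F] A →ₗ[F] A) (I : Submodule F A) : IsIdealIn mul ⊥ I :=
  isIdealIn_iff_map₂_le.2 ⟨bot_le, (map₂_bot_right mul I).le, (map₂_bot_left mul I).le⟩

theorem isSubalg (hJ : IsIdealIn mul J I) : IsSubalg mul J :=
  fun x hx y hy ↦ (hJ.2 x (hJ.1 hx) y hy).1

theorem sup (hJ : IsIdealIn mul J I) (hK : IsIdealIn mul K I) : IsIdealIn mul (J ⊔ K) I := by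
  rw [isIdealIn_iff_map₂_le] at hJ hK ⊢
  rw [map₂_sup_right, map₂_sup_left]
  exact ⟨sup_le hJ.1 hK.1, sup_le_sup hJ.2.1 hK.2.1, sup_le_sup hJ.2.2 hK.2.2⟩

theorem map₂_sup_sup_le (hJ : IsIdealIn mul J I) (hB : B ≤ I) (hC : C ≤ I) :
    map₂ mul (J ⊔ B) (J ⊔ C) ≤ J ⊔ map₂ mul B C := by
  obtain ⟨hJI, hIJ, hJI'⟩ := isIdealIn_iff_map₂_le.1 hJ
  rw [map₂_sup_left, map₂_sup_right mul B]
  exact sup_le (le_sup_of_le_left ((map₂_le_map₂_right (sup_le hJI hC)).trans hJI'))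
    (sup_le_sup_right ((map₂_le_map₂_left hB).trans hIJ) _)

theorem ds_sup_le (hJ : IsIdealIn mul J I) (hK : IsSubalg mul K) (hKI : K ≤ I) (n : ℕ) :
    ds mul (J ⊔ K) n ≤ J ⊔ ds mul K n := by
  induction n with
  | zero => exact le_rfl
  | succ n ih =>
    have hle : ds mul K n ≤ I := (hK.ds_le n).trans hKI
    rw [ds_succ, ds_succ]
    exact (map₂_le_map₂ ih ih).trans (hJ.map₂_sup_sup_le hle hle)

end IsIdealIn

theorem IsSolvableSub.sup (hJs : IsSolvableSub mul J) (hKs : IsSolvableSub mul K)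
    (hJ : IsIdealIn mul J I) (hK : IsSubalg mul K) (hKI : K ≤ I) :
    IsSolvableSub mul (J ⊔ K) := by
  obtain ⟨n, hn⟩ := hKs
  refine hJs.of_ds_le (n := n) ((hJ.ds_sup_le hK hKI n).trans ?_)
  rw [hn, sup_bot_eq]

theorem exists_isRadicalIn [FiniteDimensional F A] (mul : A →ₗ[F] A →ₗ[F] A)
    (I : Submodule F A) : ∃ R, IsRadicalIn mul I R := by
  obtain ⟨R, ⟨hRI, hRs⟩, hmax⟩ := wellFounded_gt.has_min
    {T : Submodule F A | IsIdealIn mul T I ∧ IsSolvableSub mul T} ⟨⊥, .bot mul I, 0, rfl⟩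
  refine ⟨R, hRI, hRs, fun T hTI hTs ↦ le_sup_right.trans_eq (b := R ⊔ T) ?_⟩
  exact (eq_of_le_of_not_lt le_sup_left
    (hmax (R ⊔ T) ⟨hRI.sup hTI, hRs.sup hTs hRI hTI.isSubalg hTI.1⟩)).symm

end Solvable

section Taylor

open Finset.HasAntidiagonal (antidiagonal mem_antidiagonal)

variable {F A : Type*} [Field F] [AddCommGroup A] [Module F A] {mul : A →ₗ[F] A →ₗ[F] A}
  {D : Module.End F A} {I J V W : Submodule F A}

/-- The coefficient `Dⁿ / n!` of `tⁿ` in the formal exponential `exp (t D)`; it is `0` where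
`n!` vanishes in `F`. -/
def taylorCoeff (D : Module.End F A) (n : ℕ) : Module.End F A :=
  (n.factorial : F)⁻¹ • D ^ n

/-- The elements `w` for which `exp (t D) w` vanishes to order at least `k` in `t` modulo `J`. -/
def vanishingToOrder (D : Module.End F A) (J : Submodule F A) (k : ℕ) : Submodule F A :=
  ⨅ i < k, J.comap (taylorCoeff D i)

/-- The elements which, modulo `J`, are the coefficient of `tᵏ` in `exp (t D) w` for some `w ∈ V`
such that `exp (t D) w` vanishes to order at least `k` modulo `J`. -/
def leadingCoeffs (D : Module.End F A) (J V : Submodule F A) (k : ℕ) : Submodule F A :=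
  J ⊔ (V ⊓ vanishingToOrder D J k).map (taylorCoeff D k)

theorem mem_vanishingToOrder {k : ℕ} {w : A} :
    w ∈ vanishingToOrder D J k ↔ ∀ i < k, taylorCoeff D i w ∈ J := by
  simp only [vanishingToOrder, mem_iInf, mem_comap]

theorem taylorCoeff_mem (hDI : I ∈ D.invtSubmodule) (n : ℕ) {w : A} (hw : w ∈ I) :
    taylorCoeff D n w ∈ I := by
  have hpow : (D ^ n) w ∈ I := by
    rw [Module.End.pow_apply]
    exact ((Module.End.mem_invtSubmodule_iff_mapsTo D).1 hDI).iterate n hw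
  exact I.smul_mem _ hpow

theorem leadingCoeffs_one : leadingCoeffs D J J 1 = J ⊔ J.map D := by
  have hJ : J ⊓ vanishingToOrder D J 1 = J :=
    inf_eq_left.2 fun w hw ↦ mem_vanishingToOrder.2 fun i hi ↦ by
      simpa [taylorCoeff, Nat.lt_one_iff.1 hi] using hw
  have hD : taylorCoeff D 1 = D := by simp [taylorCoeff]
  rw [leadingCoeffs, hJ, hD]

theorem leadingCoeffs_bot (k : ℕ) : leadingCoeffs D J ⊥ k = J := by
  rw [leadingCoeffs, bot_inf_eq, Submodule.map_bot, sup_bot_eq]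

theorem IsDerivation.taylorCoeff_apply_mul [CharZero F] (hD : IsDerivation mul D) (n : ℕ)
    (y z : A) :
    taylorCoeff D n (mul y z) =
      ∑ p ∈ antidiagonal n, mul (taylorCoeff D p.1 y) (taylorCoeff D p.2 z) := by
  simp only [taylorCoeff, LinearMap.smul_apply, hD.pow_apply_mul, Finset.smul_sum, map_smul]
  refine Finset.sum_congr rfl fun p hp ↦ ?_
  have hchoose : (n.factorial : F)⁻¹ * (n.choose p.1 : F) =
      (p.2.factorial : F)⁻¹ * (p.1.factorial : F)⁻¹ := by
    obtain rfl := mem_antidiagonal.1 hp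
    rw [Nat.cast_add_choose]
    have hfact := Nat.cast_ne_zero (R := F).2 (p.1 + p.2).factorial_ne_zero
    field_simp
  rw [← Nat.cast_smul_eq_nsmul F, smul_smul, smul_smul, hchoose]

theorem map₂_leadingCoeffs_le [CharZero F] (hD : IsDerivation mul D) (hDI : I ∈ D.invtSubmodule)
    (hJ : IsIdealIn mul J I) (hV : V ≤ I) (hW : W ≤ I) (k l : ℕ) :
    map₂ mul (leadingCoeffs D J V k) (leadingCoeffs D J W l) ≤
      leadingCoeffs D J (map₂ mul V W) (k + l) := by
  have hcoeff {V : Submodule F A} (hV : V ≤ I) (k : ℕ) :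
      (V ⊓ vanishingToOrder D J k).map (taylorCoeff D k) ≤ I := by
    rintro _ ⟨v, hv, rfl⟩
    exact taylorCoeff_mem hDI k (hV hv.1)
  refine (hJ.map₂_sup_sup_le (hcoeff hV k) (hcoeff hW l)).trans (sup_le le_sup_left ?_)
  refine map₂_le.2 ?_
  rintro _ ⟨v, ⟨hvV, hv⟩, rfl⟩ _ ⟨w, ⟨hwW, hw⟩, rfl⟩
  have hterm {i j : ℕ} (hij : i < k ∨ j < l) :
      mul (taylorCoeff D i v) (taylorCoeff D j w) ∈ J := by
    rcases hij with hi | hj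
    · exact (hJ.2 _ (taylorCoeff_mem hDI j (hW hwW)) _ (mem_vanishingToOrder.1 hv i hi)).2
    · exact (hJ.2 _ (taylorCoeff_mem hDI i (hV hvV)) _ (mem_vanishingToOrder.1 hw j hj)).1
  have hvw : mul v w ∈ map₂ mul V W ⊓ vanishingToOrder D J (k + l) := by
    refine ⟨apply_mem_map₂ mul hvV hwW, mem_vanishingToOrder.2 fun n hn ↦ ?_⟩
    rw [hD.taylorCoeff_apply_mul]
    refine J.sum_mem fun p hp ↦ hterm ?_
    have hsum := mem_antidiagonal.1 hp
    omega
  have hlead : taylorCoeff D (k + l) (mul v w) -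
      mul (taylorCoeff D k v) (taylorCoeff D l w) ∈ J := by
    have hkl : (k, l) ∈ antidiagonal (k + l) := mem_antidiagonal.2 rfl
    rw [hD.taylorCoeff_apply_mul, ← Finset.add_sum_erase _ _ hkl, add_sub_cancel_left]
    refine J.sum_mem fun p hp ↦ hterm ?_
    simp only [Finset.mem_erase, mem_antidiagonal, ne_eq, Prod.ext_iff] at hp
    omega
  rw [← sub_sub_cancel (taylorCoeff D (k + l) (mul v w)) (mul (taylorCoeff D k v) _)]
  exact sub_mem (mem_sup_right (mem_map_of_mem hvw)) (mem_sup_left hlead)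

theorem ds_sup_map_le_leadingCoeffs [CharZero F] (hD : IsDerivation mul D)
    (hDI : I ∈ D.invtSubmodule) (hJ : IsIdealIn mul J I) (n : ℕ) :
    ds mul (J ⊔ J.map D) n ≤ leadingCoeffs D J (ds mul J n) (2 ^ n) := by
  induction n with
  | zero => exact leadingCoeffs_one.ge
  | succ n ih =>
    have hle : ds mul J n ≤ I := (hJ.isSubalg.ds_le n).trans hJ.1
    rw [ds_succ, ds_succ, pow_succ, mul_two]
    exact (map₂_le_map₂ ih ih).trans (map₂_leadingCoeffs_le hD hDI hJ hle hle _ _)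

end Taylor

section Radical

variable {F A : Type*} [Field F] [AddCommGroup A] [Module F A] {mul : A →ₗ[F] A →ₗ[F] A}
  {D : Module.End F A} {B I J R : Submodule F A}

theorem IsIdealIn.sup_map (hJ : IsIdealIn mul J I) (hD : IsDerivation mul D)
    (hDI : I ∈ D.invtSubmodule) : IsIdealIn mul (J ⊔ J.map D) I := by
  obtain ⟨hJI, hIJ, hJI'⟩ := isIdealIn_iff_map₂_le.1 hJ
  refine isIdealIn_iff_map₂_le.2 ⟨sup_le hJI ((map_mono hJI).trans
    ((Module.End.mem_invtSubmodule_iff_map_le D).1 hDI)), ?_, ?_⟩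
  · rw [map₂_sup_right]
    refine sup_le (le_sup_of_le_left hIJ) (map₂_le.2 ?_)
    rintro x hx _ ⟨y, hy, rfl⟩
    rw [← sub_eq_of_eq_add' (hD x y)]
    exact sub_mem (mem_sup_right (mem_map_of_mem (hJ.2 x hx y hy).1))
      (mem_sup_left (hJ.2 (D x) (hDI hx) y hy).1)
  · rw [map₂_sup_left]
    refine sup_le (le_sup_of_le_left hJI') (map₂_le.2 ?_)
    rintro _ ⟨y, hy, rfl⟩ x hx
    rw [← sub_eq_of_eq_add (hD y x)]
    exact sub_mem (mem_sup_right (mem_map_of_mem (hJ.2 x hx y hy).2))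
      (mem_sup_left (hJ.2 (D x) (hDI hx) y hy).2)

theorem IsSolvableSub.sup_map [CharZero F] (hJs : IsSolvableSub mul J) (hJ : IsIdealIn mul J I)
    (hD : IsDerivation mul D) (hDI : I ∈ D.invtSubmodule) : IsSolvableSub mul (J ⊔ J.map D) := by
  obtain ⟨n, hn⟩ := hJs
  have hle := ds_sup_map_le_leadingCoeffs hD hDI hJ n
  rw [hn, leadingCoeffs_bot] at hle
  exact IsSolvableSub.of_ds_le ⟨n, hn⟩ hle

namespace IsRadicalIn

theorem mem_invtSubmodule [CharZero F] (hR : IsRadicalIn mul I R) (hD : IsDerivation mul D)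
    (hDI : I ∈ D.invtSubmodule) : R ∈ D.invtSubmodule :=
  (Module.End.mem_invtSubmodule_iff_map_le D).2 <| le_sup_right.trans <|
    hR.2.2 (R ⊔ R.map D) (hR.1.sup_map hD hDI) (hR.2.1.sup_map hR.1 hD hDI)

theorem inf_ker_le (hR : IsRadicalIn mul I R) (hmul : IsLeftLeibniz mul) (hI : IsSubalg mul I) :
    I ⊓ LinearMap.ker mul ≤ R := by
  have hker {y : A} (hy : y ∈ I ⊓ LinearMap.ker mul) (x : A) : mul y x = 0 := by
    rw [LinearMap.mem_ker.1 hy.2, LinearMap.zero_apply]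
  refine hR.2.2 _ ⟨inf_le_left, fun x hx y hy ↦ ⟨⟨hI x hx y hy.1, ?_⟩, ?_⟩⟩ ⟨1, ?_⟩
  · refine LinearMap.mem_ker.2 (LinearMap.ext fun z ↦ ?_)
    have hxyz := hmul x y z
    rwa [hker hy, hker hy, map_zero, add_zero, eq_comm] at hxyz
  · rw [hker hy]
    exact zero_mem _
  · rw [ds_succ, eq_bot_iff, map₂_le]
    exact fun y hy z _ ↦ hker hy z

theorem isIdealIn_of_isIdealIn [CharZero F] (hR : IsRadicalIn mul I R)
    (hmul : IsLeftLeibniz mul) (hI : IsIdealIn mul I B) : IsIdealIn mul R B := by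
  refine ⟨hR.1.1.trans hI.1, fun x hx y hy ↦ ?_⟩
  have hy' : y ∈ I := hR.1.1 hy
  have hleft : mul x y ∈ R := hR.mem_invtSubmodule (hmul x) (fun z hz ↦ (hI.2 x hx z hz).1) hy
  have hsymm : mul x y + mul y x ∈ R := hR.inf_ker_le hmul hI.isSubalg
    ⟨add_mem (hI.2 x hx y hy').1 (hI.2 x hx y hy').2, hmul.mul_add_mul_swap_mem_ker x y⟩
  exact ⟨hleft, (add_mem_cancel_left hleft).1 hsymm⟩

theorem le_of_isIdealIn [CharZero F] {Q : Submodule F A} (hR : IsRadicalIn mul I R)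
    (hQ : IsRadicalIn mul B Q) (hmul : IsLeftLeibniz mul) (hI : IsIdealIn mul I B) : R ≤ Q :=
  hQ.2.2 R (hR.isIdealIn_of_isIdealIn hmul hI) hR.2.1

end IsRadicalIn

end Radical

/-- over characteristic zero, a solvable subinvariant subalgebra
is contained in the radical. -/
theorem stmt_12 {F A : Type*} [Field F] [CharZero F]
    [AddCommGroup A] [Module F A] [FiniteDimensional F A]
    (mul : A →ₗ[F] A →ₗ[F] A)
    (hleib : ∀ x y z : A, mul x (mul y z) = mul (mul x y) z + mul y (mul x z))
    (S R : Submodule F A)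
    (hS : IsSubinvariantIn mul S ⊤) (hsolv : IsSolvableSub mul S)
    (hR : IsRadicalIn mul ⊤ R) :
    S ≤ R := by
  obtain ⟨t, c, rfl, ht, hsubalg, hideal⟩ := hS
  have hle_rad : ∀ i ≤ t, ∀ Q, IsRadicalIn mul (c i) Q → c 0 ≤ Q := by
    intro i
    induction i with
    | zero => exact fun ht Q hQ ↦ hQ.2.2 (c 0) (hsubalg 0 ht).isIdealIn_self hsolv
    | succ i ih =>
      intro hi Q hQ
      obtain ⟨P, hP⟩ := exists_isRadicalIn mul (c i)
      exact (ih (by omega) P hP).trans (hP.le_of_isIdealIn hQ hleib (hideal i hi))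
  exact hle_rad t le_rfl R (ht ▸ hR)
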